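/- Let a < b be positive integers with r = b mod a > 0, and suppose r divides a. Let R̄ be the complement of the identity permutation [0,1,…,r−1] of [r], i.e., R̄(i) = r−1−i. Then the extension sequence of (R̄, a) is a permutation of [a] that is nice corresponding to b. -/

import Mathlib

/-- `A` is a permutation of `[a] = {0, 1, …, a-1}`, viewed as a function `ℕ → ℕ`
restricted to `{i | i < a}`. -/
def IsPermOf (a : ℕ) (A : ℕ → ℕ) : Prop :=
  Set.BijOn A {i | i < a} {i | i < a}

/-- The complement of a permutation `A` of `[a]`: `Ā(i) = a - 1 - A(i)`. -/
def permCompl (a : ℕ) (A : ℕ → ℕ) : ℕ → ℕ := fun i => a - 1 - A i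

/-- A permutation `A` of `[a]` is *nice* corresponding to `b > a` with `a ∤ b`,
where `r = b % a` and `d = gcd(a, b)`, if `A(i) < A(i + r)` for all
`0 ≤ i ≤ a - r - 1` and `A(j) < A(j - a + r)` for all `a - r ≤ j ≤ a - d - 1`. -/
def Nice (a b : ℕ) (A : ℕ → ℕ) : Prop :=
  (∀ i, i + b % a < a → A i < A (i + b % a)) ∧
  (∀ j, a - b % a ≤ j → j + Nat.gcd a b < a → A j < A (j + b % a - a))

/-- `B` is the extension sequence of the pair `(A, b)`, where `A` is a permutation
of `[a]`: `B` is the permutation of `[b]` with `B(i) < B(j)` iff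
`A(i mod a) < A(j mod a)`, or `A(i mod a) = A(j mod a)` and `i < j`. -/
def IsExtSeq (a b : ℕ) (A B : ℕ → ℕ) : Prop :=
  IsPermOf b B ∧
  ∀ i < b, ∀ j < b,
    (B i < B j ↔ A (i % a) < A (j % a) ∨ (A (i % a) = A (j % a) ∧ i < j))

theorem IsExtSeq.lt_of_lt_of_modEq {r n : ℕ} {A B : ℕ → ℕ} (hB : IsExtSeq r n A B) {i j : ℕ}
    (hij : i < j) (hj : j < n) (hmod : i ≡ j [MOD r]) : B i < B j :=
  (hB.2 i (hij.trans hj) j hj).mpr (Or.inr ⟨congrArg A hmod, hij⟩)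

theorem gcd_eq_mod_of_mod_dvd {a b : ℕ} (hdvd : b % a ∣ a) : Nat.gcd a b = b % a :=
  (Nat.gcd_rec a b).trans (Nat.gcd_eq_left hdvd)

theorem nice_iff_of_mod_dvd {a b : ℕ} (hdvd : b % a ∣ a) {A : ℕ → ℕ} :
    Nice a b A ↔ ∀ i, i + b % a < a → A i < A (i + b % a) := by
  refine ⟨And.left, fun hshift => ⟨hshift, fun j hle hlt => ?_⟩⟩
  -- As `d = r`, the second range `a - r ≤ j ≤ a - d - 1` is empty.
  rw [gcd_eq_mod_of_mod_dvd hdvd] at hlt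
  exact absurd (Nat.lt_sub_of_add_lt hlt) hle.not_gt

theorem extSeq_of_compl_id_is_nice_general {a b : ℕ} (hdvd : b % a ∣ a) {A B : ℕ → ℕ}
    (hB : IsExtSeq (b % a) a A B) : IsPermOf a B ∧ Nice a b B := by
  refine ⟨hB.1, (nice_iff_of_mod_dvd hdvd).mpr fun i hi => ?_⟩
  have hr : 0 < b % a := Nat.pos_of_dvd_of_pos hdvd (Nat.zero_lt_of_lt hi)
  have hmod : i ≡ i + b % a [MOD b % a] := (Nat.add_mod_right i (b % a)).symm
  exact hB.lt_of_lt_of_modEq (Nat.lt_add_of_pos_right hr) hi hmod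

theorem extSeq_of_compl_id_is_nice (a b : ℕ) (ha : 0 < a) (hab : a < b)
    (hr : 0 < b % a) (hdvd : (b % a) ∣ a)
    (B : ℕ → ℕ) (hB : IsExtSeq (b % a) a (fun i => b % a - 1 - i) B) :
    IsPermOf a B ∧ Nice a b B :=
  extSeq_of_compl_id_is_nice_general hdvd hB
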